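/- arXiv:1301.1235 — 2 statements merged into one kernel-verified Lean document; each statement's English description precedes it below -/
import Mathlib

section
/- Assume the vertex c is controllable, let d ≥ 2, and let α_v, β_v (v ∈ D^d) be real constants. Then: (1) if ∑_{v∈D^d} α_v ∂_{p_v} ∈ 𝓜 then ∑_{v∈D^d} α_v x_v ∂_{p_v} ∈ 𝓜; and (2) if both ∑_{v∈D^d} α_v ∂_{p_v} ∈ 𝓜 and ∑_{v∈D^d} β_v ∂_{p_v} ∈ 𝓜, then ∑_{v∈D^d} α_v β_v ∂_{p_v} ∈ 𝓜. -/
/-!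
Bracketing `∂_{q_c}` with `X₀` and removing the `∂_{p_c}`-component gives
`∑_{v ∈ 𝒯} V''_{cv}(q_c − q_v) ∂_{p_v} ∈ 𝓜`, and every further bracket with `∂_{q_c}`
differentiates the coefficients. If `∑ α_v ∂_{p_v} ∈ 𝓜`, its bracket with `X₀` is a constant field
with position part `∑ α_v ∂_{q_v}`; the momentum part it carries because of the friction is
harmless, as the fields above do not depend on `p`. Bracketing it with the `(d − 2)`-nd derivative
gives `∑ α_v b_v x_v ∂_{p_v} ∈ 𝓜` with `b_v ≠ 0`, because the `(d − 1)`-st derivative of a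
polynomial of degree `d` is affine and its zero is minus the adjusting shift. One more bracket shows
that the space of admissible `α` is stable under `α ↦ α b` and `(α, β) ↦ α β b`. Finally `b⁻¹` is a
polynomial in `b` by Lagrange interpolation, so the factor `b` can be divided out.
-/

open scoped Classical
open Polynomial

noncomputable section

/-- Phase space ℝ^{2|V|}: positions `q = x.1` and momenta `p = x.2`. -/
abbrev Phase (V : Type) := (V → ℝ) × (V → ℝ)

/-- Lie bracket of vector fields: `[Y,Z](x) = DZ(x)·Y(x) − DY(x)·Z(x)`. -/
def lieB {V : Type} [Fintype V] (Y Z : Phase V → Phase V) : Phase V → Phase V :=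
  fun x => fderiv ℝ Z x (Y x) - fderiv ℝ Y x (Z x)

/-- The constant vector field `∂_{p_v}`. -/
def dp {V : Type} [Fintype V] [DecidableEq V] (v : V) : Phase V → Phase V :=
  fun _ => (0, Pi.single v 1)

/-- The constant vector field `∂_{q_v}`. -/
def dq {V : Type} [Fintype V] [DecidableEq V] (v : V) : Phase V → Phase V :=
  fun _ => (Pi.single v 1, 0)

/-- The constant vector field `∑_{v ∈ A} ∂_{p_v}`. -/
def dpSum {V : Type} [Fintype V] [DecidableEq V] (A : Finset V) : Phase V → Phase V :=
  fun _ => (0, ∑ v ∈ A, Pi.single v 1)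

/-- The constant vector field `∑_{v ∈ A} ∂_{q_v}`. -/
def dqSum {V : Type} [Fintype V] [DecidableEq V] (A : Finset V) : Phase V → Phase V :=
  fun _ => (∑ v ∈ A, Pi.single v 1, 0)

/-- The drift vector field
`X₀ = −∑_{v∈V*} γ_v p_v ∂_{p_v} + ∑_{v∈V} (p_v ∂_{q_v} − U_v'(q_v) ∂_{p_v})
      − ∑_{{u,v}∈E} V_{uv}'(q_u − q_v)(∂_{p_u} − ∂_{p_v})`,
written componentwise (using the symmetry `V_{vu}(x) = V_{uv}(−x)` of the
interaction potentials, the `∂_{p_v}`-component of the edge term at a vertex `v` is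
`−∑_{w ~ v} V_{vw}'(q_v − q_w)`). -/
def X0 {V : Type} [Fintype V] [DecidableEq V] (G : SimpleGraph V) [DecidableRel G.Adj]
    (γ : V → ℝ) (U : V → ℝ → ℝ) (Vp : V → V → Polynomial ℝ) : Phase V → Phase V :=
  fun x =>
    (x.2, fun v =>
      -(γ v) * x.2 v - deriv (U v) (x.1 v) -
        ∑ w ∈ Finset.univ.filter (fun w => G.Adj v w),
          (derivative (Vp v w)).eval (x.1 v - x.1 w))

/-- The smallest collection `𝓜` of vector fields on `ℝ^{2|V|}` that contains `∂_{p_v}`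
for every `v ∈ V*`, and is closed under linear combinations, Lie brackets,
bracketing with `X₀`, and multiplication by smooth scalar functions. -/
inductive MM {V : Type} [Fintype V] [DecidableEq V] (Vstar : Finset V)
    (X₀ : Phase V → Phase V) : (Phase V → Phase V) → Prop
  | basic (v : V) (hv : v ∈ Vstar) : MM Vstar X₀ (dp v)
  | add {Y Z : Phase V → Phase V} : MM Vstar X₀ Y → MM Vstar X₀ Z → MM Vstar X₀ (Y + Z)
  | smul (a : ℝ) {Y : Phase V → Phase V} : MM Vstar X₀ Y → MM Vstar X₀ (a • Y)
  | lie {Y Z : Phase V → Phase V} : MM Vstar X₀ Y → MM Vstar X₀ Z → MM Vstar X₀ (lieB Y Z)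
  | lieX {Y : Phase V → Phase V} : MM Vstar X₀ Y → MM Vstar X₀ (lieB Y X₀)
  | mulS (f : Phase V → ℝ) (hf : ContDiff ℝ (⊤ : ℕ∞) f) {Y : Phase V → Phase V} :
      MM Vstar X₀ Y → MM Vstar X₀ (fun x => f x • Y x)

/-- A vertex `v` is controllable if `∂_{q_v} ∈ 𝓜` and `∂_{p_v} ∈ 𝓜`. -/
def Controllable {V : Type} [Fintype V] [DecidableEq V] (Vstar : Finset V)
    (X₀ : Phase V → Phase V) (v : V) : Prop :=
  MM Vstar X₀ (dq v) ∧ MM Vstar X₀ (dp v)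

/-- Two polynomials are equivalent if `f(·) = g(· + δ)` for some `δ ∈ ℝ`. -/
def PolyEquiv (f g : Polynomial ℝ) : Prop :=
  ∃ δ : ℝ, ∀ x : ℝ, f.eval x = g.eval (x + δ)

/-- The set 𝒯 of neighbors ("targets") of a vertex `c`. -/
def Tset {V : Type} [Fintype V] [DecidableEq V] (G : SimpleGraph V) [DecidableRel G.Adj]
    (c : V) : Finset V :=
  Finset.univ.filter fun w => G.Adj c w

/-- The shift making a polynomial `g = ∑ a_i t^i/i!` of degree `k` adjusted
(i.e. killing the coefficient `a_{k−1}`), namely `a_{k−1}/a_k = coeff_{k−1}/(k·coeff_k)`. -/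
def adjShift (g : Polynomial ℝ) : ℝ :=
  g.coeff (g.natDegree - 1) / ((g.natDegree : ℝ) * g.leadingCoeff)

/-- The adjusted representation `g̃(·) = g(· − a_{k−1}/a_k)` of a polynomial `g`. -/
def adjRep (g : Polynomial ℝ) : Polynomial ℝ :=
  g.comp (Polynomial.X - Polynomial.C (adjShift g))

/-- `f̃_v`, the adjusted representation of `V''_{cv}`. -/
def ft {V : Type} (Vp : V → V → Polynomial ℝ) (c v : V) : Polynomial ℝ :=
  adjRep (derivative (derivative (Vp c v)))

/-- `d = max_{v∈𝒯} d_v`, the maximal degree of the adjusted polynomials `f̃_v`, `v ∈ 𝒯`. -/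
def dmax {V : Type} [Fintype V] [DecidableEq V] (G : SimpleGraph V) [DecidableRel G.Adj]
    (Vp : V → V → Polynomial ℝ) (c : V) : ℕ :=
  (Tset G c).sup fun v => (ft Vp c v).natDegree

/-- `D^d = {v ∈ 𝒯 : d_v = d}`, the neighbors of `c` of maximal adjusted degree. -/
def Dd {V : Type} [Fintype V] [DecidableEq V] (G : SimpleGraph V) [DecidableRel G.Adj]
    (Vp : V → V → Polynomial ℝ) (c : V) : Finset V :=
  (Tset G c).filter fun v => (ft Vp c v).natDegree = dmax G Vp c

/-- The coefficient `b_{vℓ}` in `f̃_v(x) = ∑_j b_{vj} x^j/j!`, i.e. `b_{vℓ} = ℓ!·coeff_ℓ(f̃_v)`. -/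
def bcoef {V : Type} (Vp : V → V → Polynomial ℝ) (c v : V) (ℓ : ℕ) : ℝ :=
  (Nat.factorial ℓ : ℝ) * (ft Vp c v).coeff ℓ

/-- The scalar function `x_v = q_c − q_v + δ_{cv}`, with `δ_{cv}` the adjusting shift
of `V''_{cv}`. -/
def xv {V : Type} [Fintype V] (Vp : V → V → Polynomial ℝ) (c v : V) : Phase V → ℝ :=
  fun x => x.1 c - x.1 v + adjShift (derivative (derivative (Vp c v)))

/-! ### Coefficient vectors and polynomials -/

theorem sum_single_mul_sum_single {ι R : Type*} [DecidableEq ι] [NonUnitalNonAssocSemiring R]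
    (s : Finset ι) (f g : ι → R) :
    (∑ i ∈ s, Pi.single i (f i)) * (∑ i ∈ s, Pi.single i (g i)) =
      (∑ i ∈ s, Pi.single i (f i * g i) : ι → R) := by
  funext i
  by_cases hi : i ∈ s <;> simp [hi]

/-- Interpolating `f` on the finitely many values of `b` turns `f ∘ b` into a polynomial in `b`. -/
theorem comp_mul_mem_of_mul_mem {ι K : Type*} [Finite ι] [Field K] {S : Submodule K (ι → K)}
    {b : ι → K} (hS : ∀ a ∈ S, b * a ∈ S) (f : K → K) {a : ι → K} (ha : a ∈ S) :
    f ∘ b * a ∈ S := by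
  classical
  have := Fintype.ofFinite ι
  let p : K[X] := Lagrange.interpolate (Finset.univ.image b) id f
  have hp : aeval b p = f ∘ b := by
    funext i
    rw [aeval_pi_apply₂, coe_aeval_eq_eval]
    exact Lagrange.eval_interpolate_at_node f Function.injective_id.injOn
      (Finset.mem_image_of_mem b (Finset.mem_univ i))
  rw [← hp]
  exact aeval_apply_smul_mem_of_le_comap' ha p b hS

theorem natDegree_adjRep (g : ℝ[X]) : (adjRep g).natDegree = g.natDegree := by
  simp [adjRep, natDegree_comp]

theorem iterate_derivative_eq_C_mul_X_add_adjShift {g : ℝ[X]} {n : ℕ}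
    (hg : g.natDegree = n + 1) :
    derivative^[n] g = C (((n + 1).factorial : ℝ) * g.leadingCoeff) * (X + C (adjShift g)) := by
  have hlc : g.leadingCoeff ≠ 0 :=
    leadingCoeff_ne_zero.2 (ne_zero_of_natDegree_gt (n := n) (by omega))
  have hcoeff : g.coeff (n + 1) = g.leadingCoeff := by rw [leadingCoeff, hg]
  have hfact : (n + 1).descFactorial n = (n + 1).factorial := by
    simpa using Nat.factorial_mul_descFactorial (Nat.le_succ n)
  ext k
  rw [coeff_iterate_derivative, coeff_C_mul, coeff_add, coeff_X, coeff_C]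
  rcases k with _ | _ | k
  · have hn : ((n : ℝ) + 1) ≠ 0 := n.cast_add_one_ne_zero
    calc (0 + n).descFactorial n • g.coeff (0 + n)
        = n.factorial * g.coeff n := by simp [Nat.descFactorial_self]
      _ = (n + 1).factorial * g.leadingCoeff * adjShift g := by
        rw [adjShift, hg, Nat.factorial_succ]
        push_cast
        field_simp
      _ = _ := by simp
  · simp [hfact, hcoeff, add_comm 1 n]
  · simp [coeff_eq_zero_of_natDegree_lt (show g.natDegree < k + 1 + 1 + n by omega)]

theorem eq_comp_neg_X_of_eval_eq {p q : ℝ[X]} (h : ∀ x, p.eval x = q.eval (-x)) :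
    p = q.comp (-X) :=
  Polynomial.funext fun x => by simp [h x]

theorem derivative_derivative_comp_neg_X {R : Type*} [CommRing R] (p : R[X]) :
    derivative (derivative (p.comp (-X))) = (derivative (derivative p)).comp (-X) := by
  simp [derivative_comp]

theorem contDiff_eval {n : WithTop ℕ∞} (p : ℝ[X]) : ContDiff ℝ n fun t : ℝ => p.eval t := by
  simpa only [coe_aeval_eq_eval] using p.contDiff_aeval (𝕜 := ℝ) n

/-! ### Brackets with constant fields -/

/-- The vector field `∑_v P_v(q_c − q_v) ∂_{p_v}` attached to a family of polynomials `P`. All the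
non-constant fields of `𝓜` that the argument uses are of this form. -/
def polyField {V : Type} (c : V) (P : V → ℝ[X]) : Phase V → Phase V :=
  fun x => (0, fun v => (P v).eval (x.1 c - x.1 v))

theorem polyField_C {V : Type} (c : V) (a : V → ℝ) :
    polyField c (fun v => C (a v)) = fun _ => (0, a) := by
  funext x
  simp [polyField]

theorem hasDerivAt_add_mul (s r : ℝ) : HasDerivAt (fun t : ℝ => s + t * r) r 0 := by
  simpa using ((hasDerivAt_id (0 : ℝ)).mul_const r).const_add s

theorem hasDerivAt_comp_add_mul {f : ℝ → ℝ} {f' s : ℝ} (hf : HasDerivAt f f' s) (r : ℝ) :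
    HasDerivAt (fun t : ℝ => f (s + t * r)) (f' * r) 0 :=
  HasDerivAt.comp (0 : ℝ) (by simpa using hf) (hasDerivAt_add_mul s r)

theorem hasDerivAt_eval_sub_line {V : Type} (p : ℝ[X]) (x y : Phase V) (v w : V) :
    HasDerivAt (fun t : ℝ => p.eval ((x + t • y).1 v - (x + t • y).1 w))
      (p.derivative.eval (x.1 v - x.1 w) * (y.1 v - y.1 w)) 0 := by
  have hline : ∀ t : ℝ, (x + t • y).1 v - (x + t • y).1 w =
      x.1 v - x.1 w + t * (y.1 v - y.1 w) := fun t => by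
    simp only [Prod.fst_add, Prod.smul_fst, Pi.add_apply, Pi.smul_apply, smul_eq_mul]
    ring
  simp only [hline]
  exact hasDerivAt_comp_add_mul (p.hasDerivAt _) _

theorem differentiable_polyField {V : Type} [Finite V] (c : V) (P : V → ℝ[X]) :
    Differentiable ℝ (polyField c P) := by
  cases nonempty_fintype V
  exact (differentiable_const _).prodMk <| differentiable_pi.2 fun v =>
    (P v).differentiable.comp (by fun_prop)

theorem polyField_sum_single {V : Type} [Fintype V] [DecidableEq V] (Vp : V → V → ℝ[X]) (c : V)
    (D : Finset V) (α : V → ℝ) :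
    polyField c (fun v => C ((∑ u ∈ D, Pi.single u (α u) : V → ℝ) v) *
        (X + C (adjShift (derivative (derivative (Vp c v)))))) =
      fun x => (0, ∑ v ∈ D, Pi.single v (α v * xv Vp c v x)) := by
  funext x
  refine Prod.ext rfl (funext fun v => ?_)
  simp [polyField, xv]

section Brackets

variable {V : Type} [Fintype V]

theorem lieB_const {y : Phase V} {Z W : Phase V → Phase V} (hZ : Differentiable ℝ Z)
    (h : ∀ x, HasDerivAt (fun t : ℝ => Z (x + t • y)) (W x) 0) :
    lieB (fun _ => y) Z = W := by
  funext x
  have hline : fderiv ℝ Z x y = W x := ((hZ x).hasFDerivAt.hasLineDerivAt y).unique (h x)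
  simp [lieB, hline]

theorem lieB_const_polyField (c : V) (a e : V → ℝ) (P : V → ℝ[X]) :
    lieB (fun _ => (a, e)) (polyField c P) =
      polyField c fun v => C (a c - a v) * derivative (P v) := by
  refine lieB_const (differentiable_polyField c P) fun x => ?_
  refine (hasDerivAt_const _ _).prodMk (hasDerivAt_pi.2 fun v => ?_)
  simpa [mul_comm] using hasDerivAt_eval_sub_line (P v) x (a, e) c v

variable (G : SimpleGraph V) [DecidableRel G.Adj] (Vp : V → V → ℝ[X])

/-- The family `V''_{cv}`, extended by `0` to the vertices `v` that are not neighbors of `c`. -/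
def targetHessian (c v : V) : ℝ[X] :=
  if G.Adj c v then derivative (derivative (Vp c v)) else 0

/-- The second derivative of the potential energy in the direction `q_c`, which is minus the
`∂_{p_c}`-component of `[∂_{q_c}, X₀]`. -/
def centerHessian (U : V → ℝ → ℝ) (c : V) : Phase V → ℝ := fun x =>
  deriv (deriv (U c)) (x.1 c) +
    ∑ w with G.Adj c w, (derivative (derivative (Vp c w))).eval (x.1 c - x.1 w)

theorem contDiff_centerHessian {n : WithTop ℕ∞} {U : V → ℝ → ℝ} {c : V}
    (hU : ContDiff ℝ n (deriv (deriv (U c)))) : ContDiff ℝ n (centerHessian G Vp U c) :=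
  (hU.comp (by fun_prop)).add <| ContDiff.sum fun w _ =>
    (contDiff_eval (derivative (derivative (Vp c w)))).comp (by fun_prop)

variable [DecidableEq V]

theorem sum_adj_mul_single_sub_self (f : V → ℝ) (c : V) :
    ∑ w with G.Adj c w, f w * ((Pi.single c 1 : V → ℝ) c - (Pi.single c 1 : V → ℝ) w) =
      ∑ w with G.Adj c w, f w :=
  Finset.sum_congr rfl fun w hw => by simp [(G.ne_of_adj (Finset.mem_filter.1 hw).2).symm]

theorem sum_adj_mul_single_sub_of_ne (f : V → ℝ) {c v : V} (hvc : v ≠ c) :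
    ∑ w with G.Adj v w, f w * ((Pi.single c 1 : V → ℝ) v - (Pi.single c 1 : V → ℝ) w) =
      if G.Adj c v then -f c else 0 := by
  by_cases hadj : G.Adj c v <;> simp [hvc, Pi.single_apply, G.adj_comm, hadj]

variable (γ : V → ℝ) {U : V → ℝ → ℝ}

theorem differentiable_X0 (hU : ∀ v, Differentiable ℝ (deriv (U v))) :
    Differentiable ℝ (X0 G γ U Vp) := by
  refine differentiable_snd.prodMk (differentiable_pi.2 fun v => ?_)
  refine (Differentiable.sub (by fun_prop) ((hU v).comp (by fun_prop))).sub ?_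
  exact Differentiable.fun_sum fun w _ =>
    (derivative (Vp v w)).differentiable.comp (by fun_prop)

theorem lieB_const_X0 (hU : ∀ v, Differentiable ℝ (deriv (U v))) (a e : V → ℝ) :
    lieB (fun _ => (a, e)) (X0 G γ U Vp) = fun x => (e, fun v =>
      -γ v * e v - deriv (deriv (U v)) (x.1 v) * a v -
        ∑ w with G.Adj v w,
          (derivative (derivative (Vp v w))).eval (x.1 v - x.1 w) * (a v - a w)) := by
  refine lieB_const (differentiable_X0 G Vp γ hU) fun x => ?_
  refine HasDerivAt.prodMk ?_ (hasDerivAt_pi.2 fun v => HasDerivAt.sub (HasDerivAt.sub ?_ ?_)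
    (HasDerivAt.fun_sum fun w _ => ?_))
  · simpa using ((hasDerivAt_id (0 : ℝ)).smul_const e).const_add x.2
  · exact (hasDerivAt_add_mul (x.2 v) (e v)).const_mul (-γ v)
  · exact hasDerivAt_comp_add_mul (hU v (x.1 v)).hasDerivAt (a v)
  · exact hasDerivAt_eval_sub_line (derivative (Vp v w)) x (a, e) v w

theorem lieB_momentum_X0 (hU : ∀ v, Differentiable ℝ (deriv (U v))) (a : V → ℝ) :
    lieB (fun _ => (0, a)) (X0 G γ U Vp) = fun _ => (a, -γ * a) := by
  rw [lieB_const_X0 G Vp γ hU]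
  funext x
  ext v <;> simp

theorem lieB_dq_X0 (hU : ∀ v, Differentiable ℝ (deriv (U v))) {c : V}
    (hsym : ∀ v, G.Adj c v → Vp v c = (Vp c v).comp (-X)) :
    lieB (dq c) (X0 G γ U Vp) + (fun x => centerHessian G Vp U c x • dp c x) =
      polyField c (targetHessian G Vp c) := by
  unfold dq
  rw [lieB_const_X0 G Vp γ hU]
  funext x
  refine Prod.ext (by simp [polyField, dp]) (funext fun v => ?_)
  rcases eq_or_ne v c with rfl | hvc
  · simp only [Prod.snd_add, Pi.add_apply, sum_adj_mul_single_sub_self]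
    simp [polyField, targetHessian, centerHessian, dp]
  · simp only [Prod.snd_add, Pi.add_apply, sum_adj_mul_single_sub_of_ne G _ hvc]
    by_cases hadj : G.Adj c v
    · simp [polyField, targetHessian, dp, hvc, hadj, hsym v hadj, derivative_derivative_comp_neg_X]
    · simp [polyField, targetHessian, dp, hvc, hadj]

end Brackets

/-! ### Coefficient vectors of fields in `𝓜` -/

namespace MM

variable {V : Type} [Fintype V] [DecidableEq V] {Vstar : Finset V} {X₀ : Phase V → Phase V}
  {c : V} {D : Finset V} {P : V → ℝ[X]} {b s : V → ℝ}

theorem zero {Y : Phase V → Phase V} (hY : MM Vstar X₀ Y) : MM Vstar X₀ 0 := by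
  simpa using MM.smul 0 hY

theorem neg {Y : Phase V → Phase V} (hY : MM Vstar X₀ Y) : MM Vstar X₀ (-Y) := by
  simpa using MM.smul (-1) hY

theorem polyField_bracket {a e : V → ℝ} (ha : MM Vstar X₀ fun _ => (a, e))
    (hP : MM Vstar X₀ (polyField c P)) :
    MM Vstar X₀ (polyField c fun v => C (a c - a v) * derivative (P v)) :=
  lieB_const_polyField c a e P ▸ MM.lie ha hP

theorem polyField_iterate_derivative (hq : MM Vstar X₀ (dq c)) (hPc : P c = 0)
    (hP : MM Vstar X₀ (polyField c P)) (k : ℕ) :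
    MM Vstar X₀ (polyField c fun v => derivative^[k] (P v)) := by
  induction k with
  | zero => exact hP
  | succ k ih =>
    convert polyField_bracket hq ih using 3 with v
    rcases eq_or_ne v c with rfl | hvc
    · simp [hPc]
    · simp [hvc, Function.iterate_succ_apply']

/-- The space of vectors `a` supported in `D` with `∑_v a_v ∂_{p_v} ∈ 𝓜`. As `MM` does not
postulate `0 ∈ 𝓜`, the zero vector comes from `hne`. -/
def coeffSpace (hne : ∃ Y, MM Vstar X₀ Y) (D : Finset V) : Submodule ℝ (V → ℝ) where
  carrier := {a | (∀ v ∉ D, a v = 0) ∧ MM Vstar X₀ fun _ => (0, a)}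
  zero_mem' := ⟨fun _ _ => rfl, hne.choose_spec.zero⟩
  add_mem' ha hb := ⟨fun v hv => by simp [ha.1 v hv, hb.1 v hv], by
    convert MM.add ha.2 hb.2 using 1; funext; simp⟩
  smul_mem' r a ha := ⟨fun v hv => by simp [ha.1 v hv], by
    convert MM.smul r ha.2 using 1; funext; simp⟩

variable {hne : ∃ Y, MM Vstar X₀ Y}

theorem sum_single_mem_coeffSpace_iff {a : V → ℝ} :
    ∑ v ∈ D, Pi.single v (a v) ∈ coeffSpace hne D ↔
      MM Vstar X₀ fun _ => (0, ∑ v ∈ D, Pi.single v (a v)) :=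
  and_iff_right fun v hv => by simp [hv]

theorem mul_inv_mul_of_mem_coeffSpace (hb : ∀ v ∈ D, b v ≠ 0) {a : V → ℝ}
    (ha : a ∈ coeffSpace hne D) :
    b * (b⁻¹ * a) = a := by
  funext v
  by_cases hv : v ∈ D
  · simp [hb v hv]
  · simp [ha.1 v hv]

theorem polyField_affine_mem
    (hX : ∀ a, MM Vstar X₀ (fun _ => (0, a)) → ∃ e, MM Vstar X₀ fun _ => (a, e))
    (hP : MM Vstar X₀ (polyField c P)) (hcD : c ∉ D)
    (hPD : ∀ v ∈ D, derivative (P v) = C (b v) * (X + C (s v)))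
    {a : V → ℝ} (ha : a ∈ coeffSpace hne D) :
    MM Vstar X₀ (polyField c fun v => C (b v * a v) * (X + C (s v))) := by
  obtain ⟨e, he⟩ := hX a ha.2
  convert (polyField_bracket he hP).neg using 1
  funext x
  refine Prod.ext (by simp [polyField]) (funext fun v => ?_)
  by_cases hv : v ∈ D
  · have heval : b v * a v * (x.1 c - x.1 v + s v) = a v * (b v * (x.1 c - x.1 v + s v)) := by
      ring
    simpa [polyField, hPD v hv, ha.1 c hcD] using heval
  · simp [polyField, ha.1 c hcD, ha.1 v hv]

section Affine

variable (hA : ∀ a ∈ coeffSpace hne D,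
  MM Vstar X₀ (polyField c fun v => C (b v * a v) * (X + C (s v))))

include hA

theorem bracket_mem_coeffSpace {a u e : V → ℝ} (hu : MM Vstar X₀ fun _ => (u, e))
    (ha : a ∈ coeffSpace hne D) : (fun v => (u c - u v) * (b v * a v)) ∈ coeffSpace hne D := by
  refine ⟨fun v hv => by simp [ha.1 v hv], ?_⟩
  rw [← polyField_C c]
  convert polyField_bracket hu (hA a ha) using 3
  simp

theorem slope_mul_mem_coeffSpace (hq : MM Vstar X₀ (dq c)) (hcD : c ∉ D) {a : V → ℝ}
    (ha : a ∈ coeffSpace hne D) : b * a ∈ coeffSpace hne D := by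
  convert bracket_mem_coeffSpace hA hq ha using 1
  funext v
  rcases eq_or_ne v c with rfl | hvc
  · simp [ha.1 v hcD]
  · simp [hvc]

theorem inv_slope_mul_mem_coeffSpace (hq : MM Vstar X₀ (dq c)) (hcD : c ∉ D) {a : V → ℝ}
    (ha : a ∈ coeffSpace hne D) : b⁻¹ * a ∈ coeffSpace hne D :=
  comp_mul_mem_of_mul_mem (fun _ => slope_mul_mem_coeffSpace hA hq hcD) (·⁻¹) ha

theorem polyField_mul_X_add_C_mem (hq : MM Vstar X₀ (dq c)) (hcD : c ∉ D) (hb : ∀ v ∈ D, b v ≠ 0)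
    {a : V → ℝ} (ha : a ∈ coeffSpace hne D) :
    MM Vstar X₀ (polyField c fun v => C (a v) * (X + C (s v))) := by
  simpa only [← Pi.mul_apply b, mul_inv_mul_of_mem_coeffSpace hb ha] using
    hA _ (inv_slope_mul_mem_coeffSpace hA hq hcD ha)

theorem mul_mem_coeffSpace
    (hX : ∀ a, MM Vstar X₀ (fun _ => (0, a)) → ∃ e, MM Vstar X₀ fun _ => (a, e))
    (hq : MM Vstar X₀ (dq c)) (hcD : c ∉ D) (hb : ∀ v ∈ D, b v ≠ 0)
    {a a' : V → ℝ} (ha : a ∈ coeffSpace hne D) (ha' : a' ∈ coeffSpace hne D) :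
    a * a' ∈ coeffSpace hne D := by
  obtain ⟨e, he⟩ := hX a' ha'.2
  have h := bracket_mem_coeffSpace hA he (inv_slope_mul_mem_coeffSpace hA hq hcD ha)
  simp only [← Pi.mul_apply b, mul_inv_mul_of_mem_coeffSpace hb ha, ha'.1 c hcD, zero_sub] at h
  convert neg_mem h using 1
  funext v
  simp [mul_comm]

end Affine

section Network

variable {G : SimpleGraph V} [DecidableRel G.Adj] {γ : V → ℝ} {U : V → ℝ → ℝ}
  {Vp : V → V → ℝ[X]}

theorem exists_position_lift (hU : ∀ v, ContDiff ℝ (⊤ : ℕ∞) (U v)) (a : V → ℝ)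
    (ha : MM Vstar (X0 G γ U Vp) fun _ => (0, a)) :
    ∃ e, MM Vstar (X0 G γ U Vp) fun _ => (a, e) :=
  ⟨-γ * a, lieB_momentum_X0 G Vp γ
    (fun v => (contDiff_infty_iff_deriv.1 (hU v)).2.differentiable (by simp)) a ▸ MM.lieX ha⟩

theorem polyField_targetHessian_mem (hU : ∀ v, ContDiff ℝ (⊤ : ℕ∞) (U v))
    (hsym : ∀ v, G.Adj c v → Vp v c = (Vp c v).comp (-X))
    (hc : Controllable Vstar (X0 G γ U Vp) c) :
    MM Vstar (X0 G γ U Vp) (polyField c (targetHessian G Vp c)) := by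
  have hU' : ContDiff ℝ (⊤ : ℕ∞) (deriv (deriv (U c))) := by
    simpa using (hU c).iterate_deriv 2
  have hdU : ∀ v, Differentiable ℝ (deriv (U v)) := fun v =>
    (contDiff_infty_iff_deriv.1 (hU v)).2.differentiable (by simp)
  rw [← lieB_dq_X0 G Vp γ hdU hsym]
  exact MM.add (MM.lieX hc.1) (MM.mulS _ (contDiff_centerHessian G Vp hU') hc.2)

theorem polyField_affine_target_mem (hU : ∀ v, ContDiff ℝ (⊤ : ℕ∞) (U v))
    (hsym : ∀ v, G.Adj c v → Vp v c = (Vp c v).comp (-X))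
    (hc : Controllable Vstar (X0 G γ U Vp) c) {hne : ∃ Y, MM Vstar (X0 G γ U Vp) Y} {n : ℕ}
    (hadj : ∀ v ∈ D, G.Adj c v)
    (hdeg : ∀ v ∈ D, (derivative (derivative (Vp c v))).natDegree = n + 1 + 1)
    {a : V → ℝ} (ha : a ∈ coeffSpace hne D) :
    MM Vstar (X0 G γ U Vp) (polyField c fun v =>
      C ((n + 1 + 1).factorial * (derivative (derivative (Vp c v))).leadingCoeff * a v) *
        (X + C (adjShift (derivative (derivative (Vp c v)))))) := by
  have hP := polyField_iterate_derivative hc.1 (by simp [targetHessian])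
    (polyField_targetHessian_mem hU hsym hc) n
  have hcD : c ∉ D := fun h => G.irrefl (hadj c h)
  refine polyField_affine_mem (exists_position_lift hU) hP hcD (fun v hv => ?_) ha
  rw [← Function.iterate_succ_apply' derivative, targetHessian, if_pos (hadj v hv),
    iterate_derivative_eq_C_mul_X_add_adjShift (hdeg v hv)]

end Network

end MM

theorem coefficient_fields_mem_general
    {V : Type} [Fintype V] [DecidableEq V] (G : SimpleGraph V) [DecidableRel G.Adj]
    (Vstar : Finset V) (γ : V → ℝ) (U : V → ℝ → ℝ) (Vp : V → V → ℝ[X])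
    (hU : ∀ v, ContDiff ℝ (⊤ : ℕ∞) (U v))
    (hsym : ∀ u v, G.Adj u v → ∀ x : ℝ, (Vp v u).eval x = (Vp u v).eval (-x))
    (c : V) (hc : Controllable Vstar (X0 G γ U Vp) c) {k : ℕ} (hk : 2 ≤ k) {D : Finset V}
    (hDT : D ⊆ Tset G c) (hD : ∀ v ∈ D, (ft Vp c v).natDegree = k) (α β : V → ℝ) :
    (MM Vstar (X0 G γ U Vp) (fun _ => (0, ∑ v ∈ D, Pi.single v (α v))) →
      MM Vstar (X0 G γ U Vp) (fun x => (0, ∑ v ∈ D, Pi.single v (α v * xv Vp c v x)))) ∧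
    (MM Vstar (X0 G γ U Vp) (fun _ => (0, ∑ v ∈ D, Pi.single v (α v))) →
      MM Vstar (X0 G γ U Vp) (fun _ => (0, ∑ v ∈ D, Pi.single v (β v))) →
      MM Vstar (X0 G γ U Vp) (fun _ => (0, ∑ v ∈ D, Pi.single v (α v * β v)))) := by
  obtain ⟨n, rfl⟩ := Nat.exists_eq_add_of_le' hk
  have hadj : ∀ v ∈ D, G.Adj c v := fun v hv => (Finset.mem_filter.1 (hDT hv)).2
  have hcD : c ∉ D := fun h => G.irrefl (hadj c h)
  have hdeg : ∀ v ∈ D, (derivative (derivative (Vp c v))).natDegree = n + 1 + 1 := fun v hv => by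
    rw [← natDegree_adjRep]
    exact hD v hv
  let b : V → ℝ := fun v =>
    (n + 1 + 1).factorial * (derivative (derivative (Vp c v))).leadingCoeff
  have hb : ∀ v ∈ D, b v ≠ 0 := fun v hv => mul_ne_zero (by positivity) <|
    leadingCoeff_ne_zero.2 <| ne_zero_of_natDegree_gt (n := n) (by rw [hdeg v hv]; omega)
  have hne : ∃ Y, MM Vstar (X0 G γ U Vp) Y := ⟨_, hc.1⟩
  have hA := fun a => MM.polyField_affine_target_mem (hne := hne) (a := a) hU
    (fun v hv => eq_comp_neg_X_of_eval_eq (hsym c v hv)) hc hadj hdeg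
  rw [← polyField_sum_single, ← sum_single_mul_sum_single]
  simp only [← MM.sum_single_mem_coeffSpace_iff (hne := hne)]
  exact ⟨MM.polyField_mul_X_add_C_mem (b := b) hA hc.1 hcD hb, fun hα hβ =>
    (MM.mul_mem_coeffSpace (b := b) hA (MM.exists_position_lift hU) hc.1 hcD hb hα hβ).2⟩

/-- Lemma 4.7 (iii). Assume `c` is controllable and `d ≥ 2`. For real
constants `α_v, β_v` (`v ∈ D^d`): (1) if `∑_{v∈D^d} α_v ∂_{p_v} ∈ 𝓜` then
`∑_{v∈D^d} α_v x_v ∂_{p_v} ∈ 𝓜`; (2) if `∑ α_v ∂_{p_v} ∈ 𝓜` and `∑ β_v ∂_{p_v} ∈ 𝓜`,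
then `∑ α_v β_v ∂_{p_v} ∈ 𝓜`. -/
theorem coefficient_fields_mem
    {V : Type} [Fintype V] [DecidableEq V] (G : SimpleGraph V) [DecidableRel G.Adj]
    (Vstar : Finset V) (γ : V → ℝ) (U : V → ℝ → ℝ) (Vp : V → V → Polynomial ℝ)
    (hγpos : ∀ v ∈ Vstar, 0 < γ v) (hγ0 : ∀ v ∉ Vstar, γ v = 0)
    (hU : ∀ v, ContDiff ℝ (⊤ : ℕ∞) (U v))
    (hsym : ∀ u v, G.Adj u v → ∀ x : ℝ, (Vp v u).eval x = (Vp u v).eval (-x))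
    (hdeg : ∀ u v, G.Adj u v → 3 ≤ (Vp u v).natDegree)
    (c : V) (hc : Controllable Vstar (X0 G γ U Vp) c)
    (hd : 2 ≤ dmax G Vp c) (α β : V → ℝ) :
    (MM Vstar (X0 G γ U Vp)
        (fun _ => ((0 : V → ℝ), ∑ v ∈ Dd G Vp c, Pi.single v (α v))) →
      MM Vstar (X0 G γ U Vp)
        (fun x => ((0 : V → ℝ), ∑ v ∈ Dd G Vp c, Pi.single v (α v * xv Vp c v x)))) ∧
    (MM Vstar (X0 G γ U Vp)
        (fun _ => ((0 : V → ℝ), ∑ v ∈ Dd G Vp c, Pi.single v (α v))) →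
      MM Vstar (X0 G γ U Vp)
        (fun _ => ((0 : V → ℝ), ∑ v ∈ Dd G Vp c, Pi.single v (β v))) →
      MM Vstar (X0 G γ U Vp)
        (fun _ => ((0 : V → ℝ), ∑ v ∈ Dd G Vp c, Pi.single v (α v * β v)))) := by
  exact coefficient_fields_mem_general G Vstar γ U Vp hU hsym c hc hd (Finset.filter_subset _ _)
    (fun _ hv => (Finset.mem_filter.1 hv).2) α β
end
end

section
/- Assume the vertex c is controllable. Then for every operator P ∈ 𝓕 = span{G, G², …, G^{d+1}}, the vector field ∑_{v∈D^d} (P f̃_v)(x_v) ∂_{p_v} belongs to 𝓜. -/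
/-!
For position-dependent forces `a, b` the bracket `[[a ∂_p, X₀], b ∂_p]` is the symmetric product
`(Da·b + Db·a) ∂_p`: the friction and the forces in `X₀` drop out. On the fields
`∑_v g_v(x_v) ∂_{p_v}` with `v ≠ c` it acts as `(g_v, h_v) ↦ -(g_v h_v)'`, since `∂_{q_v} x_v = -1`,
while bracketing with `∂_{q_c}` acts as `g_v ↦ g_v'`. Modulo `∂_{p_c}`, the field `[∂_{q_c}, X₀]` is
the family `(f̃_v)`, so `𝓜` contains everything these two operations generate from it.

If `d ≥ 1`, differentiating `f̃` `d - 1` times leaves `b_v X` with `b_v ≠ 0` on `D^d` and constants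
elsewhere; adjustedness is what removes the constant terms on `D^d`. The product of this family
with itself is `2 b_v² X` on `D^d` and `0` elsewhere. As `(b X · b' X)' = 2 b b' X`, the
coefficients of such families form an algebra, and by interpolation an algebra containing the
nowhere vanishing `b²` contains `1`. Hence the family `X` on `D^d` is available, and its product
with `g` is `G g` on `D^d`.
-/

open scoped Classical
open Polynomial

noncomputable section

/-- The operator `G v = (x·v(x))'` preserves polynomials of degree at most `d`. -/
lemma Gmem {d : ℕ} {p : Polynomial ℝ} (hp : p ∈ Polynomial.degreeLE ℝ (d : ℕ)) :
    derivative (Polynomial.X * p) ∈ Polynomial.degreeLE ℝ (d : ℕ) := by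
  rw [Polynomial.mem_degreeLE, Polynomial.degree_le_iff_coeff_zero] at hp ⊢
  intro m hm
  rw [Polynomial.coeff_derivative, Polynomial.coeff_X_mul, hp m hm, zero_mul]

/-- The operator `G : P_d → P_d`, `(G v)(x) = (x·v(x))'`, on the space `P_d` of
polynomials of degree at most `d`. -/
def Gop (d : ℕ) : Module.End ℝ (Polynomial.degreeLE ℝ (d : ℕ)) where
  toFun p := ⟨derivative (Polynomial.X * (p : Polynomial ℝ)), Gmem p.2⟩
  map_add' p q := by
    apply Subtype.ext
    simp [mul_add]
  map_smul' a p := by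
    apply Subtype.ext
    simp [mul_smul_comm]

/-- The family `𝓕 = span{G, G², …, G^{d+1}}` of operators on `P_d`. -/
def Fspan (d : ℕ) : Submodule ℝ (Module.End ℝ (Polynomial.degreeLE ℝ (d : ℕ))) :=
  Submodule.span ℝ ((fun k : ℕ => Gop d ^ k) '' Set.Icc 1 (d + 1))

/-- `f̃_v` viewed as an element of `P_d` (for `v ∈ 𝒯` its degree is indeed at most `d`,
so the junk case of the `dite` does not occur there). -/
def ftSub {V : Type} [Fintype V] [DecidableEq V] (G : SimpleGraph V) [DecidableRel G.Adj]
    (Vp : V → V → Polynomial ℝ) (c v : V) :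
    Polynomial.degreeLE ℝ ((dmax G Vp c : ℕ) : WithBot ℕ) :=
  if hv : (ft Vp c v).degree ≤ ((dmax G Vp c : ℕ) : WithBot ℕ) then
    ⟨ft Vp c v, Polynomial.mem_degreeLE.2 hv⟩
  else 0

/-! ### Families of polynomials stable under differentiation and the product `(g h)'` -/

section BracketStable

variable {ι K : Type*}

/-- The operator `G q = (x q)'` of the theorem, on polynomials of any degree. -/
def derivXMul [Semiring K] (q : K[X]) : K[X] :=
  derivative (X * q)

/-- A space of families of polynomials stable under `g ↦ g'` and `(g, h) ↦ (g h)'`. These are the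
operations induced on polynomial families by the Lie brackets of the corresponding vector
fields. -/
structure IsBracketStable [CommSemiring K] (A : Submodule K (ι → K[X])) : Prop where
  derivative_mem {g : ι → K[X]} (hg : g ∈ A) : (fun v => derivative (g v)) ∈ A
  derivative_mul_mem {g h : ι → K[X]} (hg : g ∈ A) (hh : h ∈ A) :
    (fun v => derivative (g v * h v)) ∈ A

lemma iterate_derivative_eq_C_mul_X [Semiring K] {p : K[X]} {n : ℕ} (hn : p.natDegree = n + 1)
    (hp : p.nextCoeff = 0) :
    derivative^[n] p = C ((n + 1).factorial • p.leadingCoeff) * X := by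
  ext m
  rw [coeff_iterate_derivative, coeff_C_mul, coeff_X]
  rcases m with _ | _ | m
  · have h0 : p.coeff n = 0 := by
      rw [← hp, nextCoeff_of_natDegree_pos (by omega), hn, Nat.add_sub_cancel]
    simp [h0]
  · have hfact : (0 + 1 + n).descFactorial n = (n + 1).factorial := by
      rw [Nat.descFactorial_eq_div (by omega)]
      simp [add_comm]
    rw [hfact, leadingCoeff, hn, if_pos rfl, mul_one, zero_add, add_comm 1 n]
  · simp [coeff_eq_zero_of_natDegree_lt (p := p) (n := m + 1 + 1 + n) (by omega)]

lemma derivative_C_mul_X_mul_C_mul_X [CommSemiring K] (a b : K) :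
    derivative (C a * X * (C b * X)) = (2 : K) • (C (a * b) * X) := by
  have hprod : C a * X * (C b * X) = C (a * b) * X ^ 2 := by rw [C_mul]; ring
  rw [hprod, derivative_C_mul_X_pow]
  simp [smul_eq_C_mul, mul_comm, mul_left_comm]

/-- Interpolation of `t ↦ t⁻¹` at the values of `e` writes `1` as a polynomial in `e` without
constant term. -/
lemma exists_mem_eqOn_one [Field K] {S : NonUnitalSubalgebra K (ι → K)} {e : ι → K} (he : e ∈ S)
    {D : Finset ι} (h0 : ∀ v ∈ D, e v ≠ 0) : ∃ u ∈ S, ∀ v ∈ D, u v = 1 := by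
  have hpoly (p : K[X]) : (fun v => p.eval (e v) * e v) ∈ S := by
    induction p using Polynomial.induction_on with
    | C a => simpa [Pi.smul_def] using SMulMemClass.smul_mem a he
    | add p q hp hq => simpa [add_mul, Pi.add_def] using S.add_mem hp hq
    | monomial n a h => simpa [pow_succ, mul_assoc, Pi.mul_def] using S.mul_mem h he
  refine ⟨_, hpoly (Lagrange.interpolate (D.image e) id (fun t => t⁻¹)), fun v hv => ?_⟩
  have heval := Lagrange.eval_interpolate_at_node (v := id) (fun t : K => t⁻¹)
    (Set.injOn_id _) (Finset.mem_image_of_mem e hv)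
  rw [id_eq] at heval
  rw [heval, inv_mul_cancel₀ (h0 v hv)]

namespace IsBracketStable

section CommSemiring

variable [CommSemiring K] {A : Submodule K (ι → K[X])}

lemma iterate_derivative_mem (hA : IsBracketStable A) {g : ι → K[X]} (hg : g ∈ A) (n : ℕ) :
    (fun v => derivative^[n] (g v)) ∈ A := by
  induction n with
  | zero => exact hg
  | succ n ih => simpa only [Function.iterate_succ_apply'] using hA.derivative_mem ih

lemma indicator_derivXMul_mem (hA : IsBracketStable A) {D : Set ι}
    (hX : D.indicator (fun _ => X) ∈ A) {g : ι → K[X]} (hg : g ∈ A) :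
    D.indicator (fun v => derivXMul (g v)) ∈ A := by
  convert hA.derivative_mul_mem hX hg using 1
  funext v
  by_cases hv : v ∈ D <;> simp [hv, derivXMul]

lemma indicator_iterate_derivXMul_mem_of_X (hA : IsBracketStable A) {D : Set ι}
    (hX : D.indicator (fun _ => X) ∈ A) {g : ι → K[X]} (hg : g ∈ A) (k : ℕ) :
    D.indicator (fun v => derivXMul^[k + 1] (g v)) ∈ A := by
  induction k with
  | zero => exact hA.indicator_derivXMul_mem hX hg
  | succ k ih =>
    convert hA.indicator_derivXMul_mem hX ih using 1
    exact Set.indicator_congr fun v hv => by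
      rw [Set.indicator_of_mem hv, Function.iterate_succ_apply']

end CommSemiring

variable [Field K] [CharZero K] {A : Submodule K (ι → K[X])}

/-- The functions `b` such that the family `b_v X` on `D`, extended by zero, lies in `A`. They form
an algebra since `(b X · b' X)' = 2 b b' X`. -/
def linearCoeffs (hA : IsBracketStable A) (D : Set ι) : NonUnitalSubalgebra K (ι → K) where
  carrier := {b | D.indicator (fun v => C (b v) * X) ∈ A}
  zero_mem' := by
    rw [Set.mem_ofPred_eq]
    convert A.zero_mem using 1
    ext1 v
    simp
  add_mem' {b b'} hb hb' := by
    rw [Set.mem_ofPred_eq]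
    convert A.add_mem hb hb' using 1
    ext1 v
    by_cases hv : v ∈ D <;> simp [hv, add_mul]
  smul_mem' a b hb := by
    rw [Set.mem_ofPred_eq]
    convert A.smul_mem a hb using 1
    ext1 v
    by_cases hv : v ∈ D <;> simp [hv, smul_eq_C_mul, mul_assoc]
  mul_mem' {b b'} hb hb' := by
    rw [Set.mem_ofPred_eq]
    convert A.smul_mem (2⁻¹ : K) (hA.derivative_mul_mem hb hb') using 1
    ext1 v
    by_cases hv : v ∈ D
    · rw [Pi.smul_apply, Set.indicator_of_mem hv, Set.indicator_of_mem hv, Set.indicator_of_mem hv,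
        derivative_C_mul_X_mul_C_mul_X, inv_smul_smul₀ two_ne_zero, Pi.mul_apply]
    · simp [hv]

lemma mem_linearCoeffs {hA : IsBracketStable A} {D : Set ι} {b : ι → K} :
    b ∈ hA.linearCoeffs D ↔ D.indicator (fun v => C (b v) * X) ∈ A :=
  Iff.rfl

lemma indicator_X_mem (hA : IsBracketStable A) {h : ι → K[X]} (hh : h ∈ A) {D : Finset ι}
    {b : ι → K} (hb : ∀ v ∈ D, b v ≠ 0) (hD : ∀ v ∈ D, h v = C (b v) * X)
    (hD' : ∀ v ∉ D, derivative (h v) = 0) :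
    (D : Set ι).indicator (fun _ => X) ∈ A := by
  have hsq : b * b ∈ hA.linearCoeffs D := by
    rw [mem_linearCoeffs]
    convert A.smul_mem (2⁻¹ : K) (hA.derivative_mul_mem hh hh) using 1
    funext v
    by_cases hv : v ∈ D
    · rw [Pi.smul_apply, Set.indicator_of_mem hv, hD v hv, derivative_C_mul_X_mul_C_mul_X,
        inv_smul_smul₀ two_ne_zero, Pi.mul_apply]
    · simp [hv, hD' v hv]
  obtain ⟨u, hu, hu1⟩ := exists_mem_eqOn_one hsq fun v hv => mul_self_ne_zero.2 (hb v hv)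
  convert mem_linearCoeffs.1 hu using 1
  exact Set.indicator_congr fun v hv => by simp [hu1 v hv]

lemma indicator_X_mem_of_nextCoeff_eq_zero (hA : IsBracketStable A) {f : ι → K[X]} (hf : f ∈ A)
    {D : Finset ι} {n : ℕ} (hD : ∀ v ∈ D, (f v).natDegree = n + 1)
    (hadj : ∀ v ∈ D, (f v).nextCoeff = 0) (hD' : ∀ v ∉ D, (f v).degree < (n + 1 : ℕ)) :
    (D : Set ι).indicator (fun _ => X) ∈ A := by
  refine hA.indicator_X_mem (hA.iterate_derivative_mem hf n)
    (b := fun v => (n + 1).factorial • (f v).leadingCoeff) (fun v hv => ?_)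
    (fun v hv => iterate_derivative_eq_C_mul_X (hD v hv) (hadj v hv)) (fun v hv => ?_)
  · have hne : f v ≠ 0 := ne_zero_of_natDegree_gt (n := n) (by simp [hD v hv])
    exact smul_ne_zero (Nat.factorial_ne_zero _) (leadingCoeff_ne_zero.2 hne)
  · rw [← Function.iterate_succ_apply' derivative]
    exact iterate_derivative_eq_zero_of_degree_lt (hD' v hv)

theorem indicator_iterate_derivXMul_mem (hA : IsBracketStable A) {f : ι → K[X]} (hf : f ∈ A)
    {D : Finset ι} {d : ℕ} (hD : ∀ v ∈ D, (f v).natDegree = d)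
    (hadj : ∀ v ∈ D, (f v).nextCoeff = 0) (hD' : ∀ v ∉ D, (f v).degree < d) {k : ℕ} (hk : k ≠ 0) :
    (D : Set ι).indicator (fun v => derivXMul^[k] (f v)) ∈ A := by
  rcases d with _ | n
  · -- In degree zero `G` is the identity on `D`, and the family vanishes off `D`.
    convert hf using 1
    ext1 v
    by_cases hv : v ∈ D
    · rw [Set.indicator_of_mem hv, Function.iterate_fixed]
      rw [eq_C_of_natDegree_eq_zero (hD v hv), derivXMul, X_mul_C, derivative_C_mul_X]
    · have hzero : f v = 0 := by simpa [Nat.WithBot.lt_zero_iff] using hD' v hv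
      simp [hv, hzero]
  · obtain ⟨k, rfl⟩ := Nat.exists_eq_succ_of_ne_zero hk
    exact hA.indicator_iterate_derivXMul_mem_of_X
      (hA.indicator_X_mem_of_nextCoeff_eq_zero hf hD hadj hD') hf k

end IsBracketStable

end BracketStable

/-! ### Lie brackets of vertical and second-order vector fields -/

section SecondOrder

open VectorField

variable {𝕜 E : Type*} [NontriviallyNormedField 𝕜] [NormedAddCommGroup E] [NormedSpace 𝕜 E]

/-- The vector field `a(q) ∂_p` on `E × E` given by a position-dependent force `a`. -/
def vertical (a : E → E) : E × E → E × E :=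
  fun x => (0, a x.1)

/-- The vector field of the second-order equation `q̈ = Γ q̇ + F(q)`, with `Γ` a linear friction
(of arbitrary sign) and `F` a position-dependent force. -/
def secondOrder (Γ : E →L[𝕜] E) (F : E → E) : E × E → E × E :=
  fun x => (x.2, Γ x.2 + F x.1)

lemma fderiv_vertical_apply {a : E → E} (ha : Differentiable 𝕜 a) (x y : E × E) :
    fderiv 𝕜 (vertical a) x y = (0, fderiv 𝕜 a x.1 y.1) := by
  have h := (hasFDerivAt_const (0 : E) x).prodMk
    ((ha x.1).hasFDerivAt.comp x (hasFDerivAt_fst (𝕜 := 𝕜)))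
  exact DFunLike.congr_fun (HasFDerivAt.fderiv h) y

lemma fderiv_secondOrder_apply (Γ : E →L[𝕜] E) {F : E → E} (hF : Differentiable 𝕜 F)
    (x y : E × E) :
    fderiv 𝕜 (secondOrder Γ F) x y = (y.2, Γ y.2 + fderiv 𝕜 F x.1 y.1) := by
  have h := (hasFDerivAt_snd (𝕜 := 𝕜) (p := x)).prodMk
    ((Γ.hasFDerivAt.comp x (hasFDerivAt_snd (𝕜 := 𝕜))).add
      ((hF x.1).hasFDerivAt.comp x (hasFDerivAt_fst (𝕜 := 𝕜))))
  exact DFunLike.congr_fun (HasFDerivAt.fderiv h) y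

lemma lieBracket_const_vertical (w : E) {a : E → E} (ha : Differentiable 𝕜 a) :
    lieBracket 𝕜 (fun _ => (w, 0)) (vertical a) = vertical fun q => fderiv 𝕜 a q w := by
  funext x
  simp [lieBracket, fderiv_vertical_apply ha, vertical]

lemma lieBracket_const_secondOrder (w : E) (Γ : E →L[𝕜] E) {F : E → E}
    (hF : Differentiable 𝕜 F) :
    lieBracket 𝕜 (fun _ => (w, 0)) (secondOrder Γ F) = vertical fun q => fderiv 𝕜 F q w := by
  funext x
  simp [lieBracket, fderiv_secondOrder_apply Γ hF, vertical]

lemma lieBracket_vertical_secondOrder {a F : E → E} (ha : Differentiable 𝕜 a) (Γ : E →L[𝕜] E)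
    (hF : Differentiable 𝕜 F) :
    lieBracket 𝕜 (vertical a) (secondOrder Γ F) =
      fun x => (a x.1, Γ (a x.1) - fderiv 𝕜 a x.1 x.2) := by
  funext x
  simp [lieBracket, fderiv_vertical_apply ha, fderiv_secondOrder_apply Γ hF, vertical, secondOrder]

lemma fderiv_lieBracket_vertical_secondOrder_apply_vertical {a F : E → E}
    (ha : Differentiable 𝕜 a) (ha' : Differentiable 𝕜 (fderiv 𝕜 a)) (Γ : E →L[𝕜] E)
    (hF : Differentiable 𝕜 F) (x : E × E) (u : E) :
    fderiv 𝕜 (lieBracket 𝕜 (vertical a) (secondOrder Γ F)) x (0, u) = (0, -fderiv 𝕜 a x.1 u) := by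
  rw [lieBracket_vertical_secondOrder ha Γ hF]
  have hfst := (ha x.1).hasFDerivAt.comp x (hasFDerivAt_fst (𝕜 := 𝕜))
  have hsnd := (Γ.hasFDerivAt.comp x hfst).sub
    (((ha' x.1).hasFDerivAt.comp x (hasFDerivAt_fst (𝕜 := 𝕜))).clm_apply
      (hasFDerivAt_snd (𝕜 := 𝕜)))
  exact (DFunLike.congr_fun (HasFDerivAt.fderiv (hfst.prodMk hsnd)) (0, u)).trans (by simp)

/-- The result involves neither `Γ` nor `F`: in `[a ∂_p, X]` they only produce terms independent of
`p`, which the vertical field `b ∂_p` annihilates. -/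
lemma lieBracket_lieBracket_vertical {a b F : E → E} (ha : Differentiable 𝕜 a)
    (ha' : Differentiable 𝕜 (fderiv 𝕜 a)) (hb : Differentiable 𝕜 b) (Γ : E →L[𝕜] E)
    (hF : Differentiable 𝕜 F) :
    lieBracket 𝕜 (lieBracket 𝕜 (vertical a) (secondOrder Γ F)) (vertical b) =
      vertical fun q => fderiv 𝕜 b q (a q) + fderiv 𝕜 a q (b q) := by
  funext x
  rw [lieBracket, fderiv_vertical_apply hb, vertical,
    fderiv_lieBracket_vertical_secondOrder_apply_vertical ha ha' Γ hF,
    lieBracket_vertical_secondOrder ha Γ hF]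
  simp [vertical]

end SecondOrder

/-! ### Pair forces -/

section PairForce

/-- The force `∑_v g_v(q_c - q_v + δ_v) e_v` determined by a family of polynomials `g`. -/
def pairForce {V : Type*} (c : V) (δ : V → ℝ) (g : V → ℝ[X]) : (V → ℝ) → V → ℝ :=
  fun q v => (g v).eval (q c - q v + δ v)

variable {V : Type*} (c : V) (δ : V → ℝ)

lemma pairForce_apply_self {g : V → ℝ[X]} (hg : g c = 0) (q : V → ℝ) :
    pairForce c δ g q c = 0 := by
  simp [pairForce, hg]

lemma hasFDerivAt_eval_sub_add_const [Finite V] (p : ℝ[X]) (u v : V) (t : ℝ) (q : V → ℝ) :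
    HasFDerivAt (fun q : V → ℝ => p.eval (q u - q v + t))
      ((derivative p).eval (q u - q v + t) •
        ((ContinuousLinearMap.proj u : (V → ℝ) →L[ℝ] ℝ) - ContinuousLinearMap.proj v)) q := by
  have := Fintype.ofFinite V
  have hproj (w : V) : HasFDerivAt (fun q : V → ℝ => q w)
      (ContinuousLinearMap.proj w : (V → ℝ) →L[ℝ] ℝ) q := hasFDerivAt_apply w q
  exact (p.hasDerivAt _).comp_hasFDerivAt q (((hproj u).sub (hproj v)).add_const t)

lemma contDiff_pairForce [Fintype V] (g : V → ℝ[X]) : ContDiff ℝ (⊤ : ℕ∞) (pairForce c δ g) :=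
  contDiff_pi.2 fun v => ((g v).contDiff_aeval (⊤ : ℕ∞)).comp (by fun_prop)

lemma fderiv_pairForce_apply [Finite V] (g : V → ℝ[X]) (q w : V → ℝ) :
    fderiv ℝ (pairForce c δ g) q w =
      fun v => (derivative (g v)).eval (q c - q v + δ v) * (w c - w v) := by
  have := Fintype.ofFinite V
  have h := hasFDerivAt_pi.2 fun v => hasFDerivAt_eval_sub_add_const (g v) c v (δ v) q
  exact DFunLike.congr_fun (HasFDerivAt.fderiv h) w

lemma fderiv_pairForce_single [Finite V] [DecidableEq V] {g : V → ℝ[X]} (hg : g c = 0)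
    (q : V → ℝ) :
    fderiv ℝ (pairForce c δ g) q (Pi.single c 1) =
      pairForce c δ (fun v => derivative (g v)) q := by
  rw [fderiv_pairForce_apply]
  funext v
  by_cases hv : v = c
  · subst hv
    simp [pairForce, hg]
  · simp [pairForce, hv]

lemma fderiv_pairForce_pairForce_add [Finite V] {g h : V → ℝ[X]} (hg : g c = 0) (hh : h c = 0)
    (q : V → ℝ) :
    fderiv ℝ (pairForce c δ h) q (pairForce c δ g q) +
        fderiv ℝ (pairForce c δ g) q (pairForce c δ h q) =
      -pairForce c δ (fun v => derivative (g v * h v)) q := by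
  funext v
  rw [Pi.add_apply, fderiv_pairForce_apply, fderiv_pairForce_apply, pairForce_apply_self c δ hg,
    pairForce_apply_self c δ hh]
  simp only [pairForce, Pi.neg_apply, derivative_mul, eval_add, eval_mul]
  ring

end PairForce

/-! ### Admissible families of polynomials -/

section Admissible

variable {V : Type} [Fintype V]

lemma lieB_eq_lieBracket (Y Z : Phase V → Phase V) : lieB Y Z = VectorField.lieBracket ℝ Y Z :=
  rfl

variable [DecidableEq V] {Vstar : Finset V} {X₀ : Phase V → Phase V} {c : V}

lemma dq_eq_const (v : V) : dq v = fun _ => (Pi.single v 1, 0) :=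
  rfl

lemma MM.vertical_update_zero {a : (V → ℝ) → V → ℝ} (ha : MM Vstar X₀ (vertical a))
    (hsmooth : ContDiff ℝ (⊤ : ℕ∞) fun q => a q c) (hp : MM Vstar X₀ (dp c)) :
    MM Vstar X₀ (vertical fun q => Function.update (a q) c 0) := by
  convert ha.add (MM.mulS (fun x => -a x.1 c) (hsmooth.comp contDiff_fst).neg hp) using 1
  ext x v
  · simp [vertical, dp]
  · by_cases hv : v = c
    · subst hv
      simp [vertical, dp]
    · simp [vertical, dp, hv]

/-- The families `g` vanishing at `c` such that `∑_v g_v(q_c - q_v + δ_v) ∂_{p_v}` lies in `𝓜`. -/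
def admissible (hc : Controllable Vstar X₀ c) (δ : V → ℝ) : Submodule ℝ (V → ℝ[X]) where
  carrier := {g | g c = 0 ∧ MM Vstar X₀ (vertical (pairForce c δ g))}
  zero_mem' := by
    refine ⟨rfl, ?_⟩
    convert MM.smul 0 hc.2
    ext x v <;> simp [vertical, pairForce]
  add_mem' := by
    rintro g h ⟨hgc, hg⟩ ⟨hhc, hh⟩
    refine ⟨by simp [hgc, hhc], ?_⟩
    convert hg.add hh
    ext x v <;> simp [vertical, pairForce]
  smul_mem' := by
    rintro a g ⟨hgc, hg⟩
    refine ⟨by simp [hgc], ?_⟩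
    convert MM.smul a hg
    ext x v <;> simp [vertical, pairForce]

lemma mem_admissible {hc : Controllable Vstar X₀ c} {δ : V → ℝ} {g : V → ℝ[X]} :
    g ∈ admissible hc δ ↔ g c = 0 ∧ MM Vstar X₀ (vertical (pairForce c δ g)) :=
  Iff.rfl

variable {Γ : (V → ℝ) →L[ℝ] V → ℝ} {F : (V → ℝ) → V → ℝ}

lemma isBracketStable_admissible (hF : Differentiable ℝ F)
    (hc : Controllable Vstar (secondOrder Γ F) c) (δ : V → ℝ) :
    IsBracketStable (admissible hc δ) where
  derivative_mem := by
    rintro g ⟨hgc, hg⟩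
    refine ⟨by simp [hgc], ?_⟩
    have hbracket := hc.1.lie hg
    rw [lieB_eq_lieBracket, dq_eq_const, lieBracket_const_vertical _
      ((contDiff_pairForce c δ g).differentiable (by simp))] at hbracket
    simpa only [fderiv_pairForce_single c δ hgc] using hbracket
  derivative_mul_mem := by
    rintro g h ⟨hgc, hg⟩ ⟨hhc, hh⟩
    refine ⟨by simp [hgc], ?_⟩
    have hbracket := MM.smul (-1) (hg.lieX.lie hh)
    obtain ⟨hg', hg''⟩ := contDiff_infty_iff_fderiv.1 (contDiff_pairForce c δ g)
    rw [lieB_eq_lieBracket, lieB_eq_lieBracket, lieBracket_lieBracket_vertical hg'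
      (hg''.differentiable (by simp)) ((contDiff_pairForce c δ h).differentiable (by simp)) Γ hF]
      at hbracket
    simp only [fderiv_pairForce_pairForce_add c δ hgc hhc] at hbracket
    convert hbracket
    ext x v <;> simp [vertical]

/-- `[∂_{q_c}, X₀]` is the vertical field of `∂F/∂q_c`, whose component at `c` may be discarded. -/
lemma mem_admissible_of_pairForce_eq_fderiv (hF : ContDiff ℝ (⊤ : ℕ∞) F)
    (hc : Controllable Vstar (secondOrder Γ F) c) {δ : V → ℝ} {g : V → ℝ[X]} (hgc : g c = 0)
    (hg : ∀ q, ∀ v ≠ c, pairForce c δ g q v = fderiv ℝ F q (Pi.single c 1) v) :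
    g ∈ admissible hc δ := by
  refine mem_admissible.2 ⟨hgc, ?_⟩
  have hbracket := hc.1.lieX
  rw [lieB_eq_lieBracket, dq_eq_const,
    lieBracket_const_secondOrder _ _ (hF.differentiable (by simp))] at hbracket
  have hsmooth : ContDiff ℝ (⊤ : ℕ∞) fun q => fderiv ℝ F q (Pi.single c 1) c :=
    contDiff_pi.1 ((hF.fderiv_right (by simp)).clm_apply contDiff_const) c
  convert hbracket.vertical_update_zero hsmooth hc.2 using 2
  funext q v
  by_cases hv : v = c
  · subst hv
    simp [pairForce_apply_self v δ hgc]
  · simp [hv, hg q v hv]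

end Admissible

/-! ### The network drift -/

section Network

/-- The position-dependent part of the drift `X₀`: pinning and interaction forces. -/
def networkForce {V : Type} [Fintype V] (G : SimpleGraph V) [DecidableRel G.Adj] (U : V → ℝ → ℝ)
    (Vp : V → V → ℝ[X]) : (V → ℝ) → V → ℝ :=
  fun q v => -deriv (U v) (q v) -
    ∑ w ∈ Finset.univ.filter (fun w => G.Adj v w), (derivative (Vp v w)).eval (q v - q w)

variable {V : Type} [Fintype V] (G : SimpleGraph V) [DecidableRel G.Adj]
  {U : V → ℝ → ℝ} (Vp : V → V → ℝ[X])

lemma X0_eq_secondOrder [DecidableEq V] (γ : V → ℝ) (U : V → ℝ → ℝ) :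
    X0 G γ U Vp =
      secondOrder (ContinuousLinearMap.mul ℝ (V → ℝ) (-γ)) (networkForce G U Vp) := by
  ext x v
  · rfl
  · simp only [X0, neg_mul, secondOrder, map_neg, neg_apply, ContinuousLinearMap.mul_apply',
      Pi.add_apply, Pi.neg_apply, Pi.mul_apply, networkForce]
    ring

lemma contDiff_networkForce (hU : ∀ v, ContDiff ℝ (⊤ : ℕ∞) (U v)) :
    ContDiff ℝ (⊤ : ℕ∞) (networkForce G U Vp) := by
  have hU' (v : V) : ContDiff ℝ (⊤ : ℕ∞) (deriv (U v)) := (contDiff_infty_iff_deriv.1 (hU v)).2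
  refine contDiff_pi.2 fun v => ContDiff.sub (((hU' v).comp (contDiff_apply ℝ ℝ v)).neg)
    (ContDiff.sum fun w _ => ?_)
  exact ((derivative (Vp v w)).contDiff_aeval (⊤ : ℕ∞)).comp (by fun_prop)

lemma fderiv_networkForce_apply (hU : ∀ v, ContDiff ℝ (⊤ : ℕ∞) (U v)) (q y : V → ℝ) :
    fderiv ℝ (networkForce G U Vp) q y = fun v => -(deriv (deriv (U v)) (q v) * y v) -
      ∑ w ∈ Finset.univ.filter (fun w => G.Adj v w),
        (derivative (derivative (Vp v w))).eval (q v - q w) * (y v - y w) := by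
  have hpin (v : V) : HasDerivAt (deriv (U v)) (deriv (deriv (U v)) (q v)) (q v) :=
    ((contDiff_infty_iff_deriv.1 (hU v)).2.differentiable (by simp) _).hasDerivAt
  have hint (v w : V) := hasFDerivAt_eval_sub_add_const (derivative (Vp v w)) v w 0 q
  have h := hasFDerivAt_pi.2 fun v => ((hpin v).comp_hasFDerivAt q (hasFDerivAt_apply v q)).neg.sub
    (HasFDerivAt.fun_sum fun w (_ : w ∈ Finset.univ.filter (fun w => G.Adj v w)) => hint v w)
  simp only [add_zero] at h
  exact (DFunLike.congr_fun (HasFDerivAt.fderiv h) y).trans (by funext v; simp)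

lemma fderiv_networkForce_single_of_ne [DecidableEq V] (hU : ∀ v, ContDiff ℝ (⊤ : ℕ∞) (U v))
    (q : V → ℝ) {c v : V} (hv : v ≠ c) :
    fderiv ℝ (networkForce G U Vp) q (Pi.single c 1) v =
      if G.Adj c v then (derivative (derivative (Vp v c))).eval (q v - q c) else 0 := by
  rw [fderiv_networkForce_apply G Vp hU]
  beta_reduce
  rw [Finset.sum_filter, Finset.sum_eq_single c]
  · by_cases hadj : G.Adj c v <;> simp [hv, G.adj_comm v c, hadj]
  · intro w _ hw
    simp [hv, hw]
  · simp

end Network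

/-! ### Adjusted interaction polynomials -/

section AdjustedInteraction

lemma eval_derivative_derivative_of_eval_neg {R : Type*} [CommRing R] [IsDomain R] [Infinite R]
    {p r : R[X]} (h : ∀ x, r.eval x = p.eval (-x)) (x : R) :
    (derivative (derivative r)).eval x = (derivative (derivative p)).eval (-x) := by
  obtain rfl : r = p.comp (-X) := Polynomial.funext fun x => by simp [h]
  simp [derivative_comp]

lemma adjRep_eq_taylor (g : ℝ[X]) : adjRep g = taylor (-adjShift g) g := by
  simp [adjRep, taylor_apply, sub_eq_add_neg]

lemma eval_adjRep_add_adjShift (g : ℝ[X]) (t : ℝ) :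
    (adjRep g).eval (t + adjShift g) = g.eval t := by
  simp [adjRep]

lemma coeff_taylor_of_natDegree_eq_succ {R : Type*} [CommSemiring R] {p : R[X]} {n : ℕ}
    (hp : p.natDegree = n + 1) (r : R) :
    (taylor r p).coeff n = p.coeff n + (n + 1) * p.leadingCoeff * r := by
  have hlin : (hasseDeriv n p).natDegree ≤ 1 := by
    have := natDegree_hasseDeriv_le p n
    omega
  rw [taylor_coeff, eq_X_add_C_of_natDegree_le_one hlin]
  simp [hasseDeriv_coeff, leadingCoeff, hp, add_comm 1 n, add_comm (p.coeff n)]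

lemma nextCoeff_adjRep (g : ℝ[X]) : (adjRep g).nextCoeff = 0 := by
  rw [adjRep_eq_taylor]
  rcases eq_or_ne g.natDegree 0 with hconst | hpos
  · exact nextCoeff_eq_zero.2 (Or.inl (by rwa [natDegree_taylor]))
  obtain ⟨n, hn⟩ := Nat.exists_eq_add_one_of_ne_zero hpos
  have hlead : g.leadingCoeff ≠ 0 :=
    leadingCoeff_ne_zero.2 (ne_zero_of_natDegree_gt (n := n) (by omega))
  have hn' : (n : ℝ) + 1 ≠ 0 := by positivity
  rw [nextCoeff_of_natDegree_pos (by rw [natDegree_taylor]; omega), natDegree_taylor, hn,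
    Nat.add_sub_cancel, coeff_taylor_of_natDegree_eq_succ hn, adjShift, hn, Nat.add_sub_cancel,
    Nat.cast_add_one]
  field_simp
  ring

/-- The shifts `δ_{cv}`. -/
def adjShifts {V : Type*} (Vp : V → V → ℝ[X]) (c : V) : V → ℝ :=
  fun v => adjShift (derivative (derivative (Vp c v)))

variable {V : Type} [Fintype V] [DecidableEq V] {G : SimpleGraph V} [DecidableRel G.Adj]
  {Vp : V → V → ℝ[X]} {c : V}

lemma indicator_ft_mem_admissible {Vstar : Finset V} {Γ : (V → ℝ) →L[ℝ] V → ℝ} {U : V → ℝ → ℝ}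
    (hU : ∀ v, ContDiff ℝ (⊤ : ℕ∞) (U v))
    (hsym : ∀ v, G.Adj c v → ∀ x : ℝ, (Vp v c).eval x = (Vp c v).eval (-x))
    (hc : Controllable Vstar (secondOrder Γ (networkForce G U Vp)) c) :
    (Tset G c : Set V).indicator (ft Vp c) ∈ admissible hc (adjShifts Vp c) := by
  refine mem_admissible_of_pairForce_eq_fderiv (contDiff_networkForce G Vp hU) hc
    (by simp [Tset]) fun q v hv => ?_
  rw [fderiv_networkForce_single_of_ne G Vp hU q hv, pairForce]
  by_cases hadj : G.Adj c v
  · rw [if_pos hadj, Set.indicator_of_mem (by simpa [Tset]), ft, adjShifts,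
      eval_adjRep_add_adjShift, eval_derivative_derivative_of_eval_neg (hsym v hadj), neg_sub]
  · simp [Tset, hadj]

lemma natDegree_ft_of_mem_Dd {v : V} (hv : v ∈ Dd G Vp c) :
    (ft Vp c v).natDegree = dmax G Vp c :=
  (Finset.mem_filter.1 hv).2

lemma indicator_ft_of_mem_Dd {v : V} (hv : v ∈ Dd G Vp c) :
    (Tset G c : Set V).indicator (ft Vp c) v = ft Vp c v :=
  Set.indicator_of_mem (Finset.mem_of_mem_filter v hv) _

lemma degree_indicator_ft_lt_of_notMem_Dd {v : V} (hv : v ∉ Dd G Vp c) :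
    ((Tset G c : Set V).indicator (ft Vp c) v).degree < dmax G Vp c := by
  by_cases hT : v ∈ Tset G c
  · have hle : (ft Vp c v).natDegree ≤ dmax G Vp c :=
      Finset.le_sup (f := fun v => (ft Vp c v).natDegree) hT
    have hne : (ft Vp c v).natDegree ≠ dmax G Vp c := fun h => hv (Finset.mem_filter.2 ⟨hT, h⟩)
    rw [Set.indicator_of_mem (Finset.mem_coe.2 hT)]
    exact degree_le_natDegree.trans_lt (WithBot.coe_lt_coe.2 (hle.lt_of_ne hne))
  · simp [hT]

lemma coe_ftSub_of_mem_Dd {v : V} (hv : v ∈ Dd G Vp c) :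
    (ftSub G Vp c v : ℝ[X]) = ft Vp c v := by
  rw [ftSub, dif_pos (natDegree_le_iff_degree_le.1 (natDegree_ft_of_mem_Dd hv).le)]

lemma coe_Gop_pow_apply (d k : ℕ) (p : degreeLE ℝ (d : ℕ)) :
    ((Gop d ^ k) p : ℝ[X]) = derivXMul^[k] (p : ℝ[X]) := by
  have hsemiconj : Function.Semiconj Subtype.val (Gop d) derivXMul := fun _ => rfl
  rw [Module.End.pow_apply]
  exact hsemiconj.iterate_right k p

variable (G Vp c)

/-- The family `(P f̃_v)_{v ∈ D^d}`, extended by zero, as a linear function of the operator `P`. -/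
def operatorFamily : Module.End ℝ (degreeLE ℝ (dmax G Vp c : ℕ)) →ₗ[ℝ] V → ℝ[X] where
  toFun P := (Dd G Vp c : Set V).indicator fun v => (P (ftSub G Vp c v) : ℝ[X])
  map_add' _ _ := Set.indicator_add _ _ _
  map_smul' a _ := Set.indicator_const_smul _ a _

lemma vertical_pairForce_operatorFamily
    (P : Module.End ℝ (degreeLE ℝ (dmax G Vp c : ℕ))) :
    vertical (pairForce c (adjShifts Vp c) (operatorFamily G Vp c P)) = fun x =>
      ((0 : V → ℝ), ∑ v ∈ Dd G Vp c,
        Pi.single v ((P (ftSub G Vp c v) : ℝ[X]).eval (xv Vp c v x))) := by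
  ext x v
  · rfl
  · by_cases hv : v ∈ Dd G Vp c <;>
      simp [vertical, pairForce, operatorFamily, adjShifts, xv, Finset.sum_apply, Pi.single_apply,
        hv]

variable {G Vp c}

lemma Fspan_le_comap_operatorFamily {A : Submodule ℝ (V → ℝ[X])} (hA : IsBracketStable A)
    (hf : (Tset G c : Set V).indicator (ft Vp c) ∈ A) :
    Fspan (dmax G Vp c) ≤ A.comap (operatorFamily G Vp c) := by
  refine Submodule.span_le.2 ?_
  rintro _ ⟨k, hk, rfl⟩
  have hmem := hA.indicator_iterate_derivXMul_mem hf
    (fun v hv => by rw [indicator_ft_of_mem_Dd hv, natDegree_ft_of_mem_Dd hv])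
    (fun v hv => by rw [indicator_ft_of_mem_Dd hv, ft, nextCoeff_adjRep])
    (fun v hv => degree_indicator_ft_lt_of_notMem_Dd hv) (Nat.one_le_iff_ne_zero.1 hk.1)
  have heq : operatorFamily G Vp c (Gop (dmax G Vp c) ^ k) =
      (Dd G Vp c : Set V).indicator fun v =>
        derivXMul^[k] ((Tset G c : Set V).indicator (ft Vp c) v) :=
    Set.indicator_congr fun v hv => by
      rw [coe_Gop_pow_apply, coe_ftSub_of_mem_Dd hv, indicator_ft_of_mem_Dd hv]
  rw [SetLike.mem_coe, Submodule.mem_comap, heq]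
  exact hmem

end AdjustedInteraction

theorem operator_field_mem_general
    {V : Type} [Fintype V] [DecidableEq V] (G : SimpleGraph V) [DecidableRel G.Adj]
    (Vstar : Finset V) (γ : V → ℝ) (U : V → ℝ → ℝ) (Vp : V → V → Polynomial ℝ)
    (hU : ∀ v, ContDiff ℝ (⊤ : ℕ∞) (U v)) (c : V)
    (hsym : ∀ v, G.Adj c v → ∀ x : ℝ, (Vp v c).eval x = (Vp c v).eval (-x))
    (hc : Controllable Vstar (X0 G γ U Vp) c)
    (P : Module.End ℝ (Polynomial.degreeLE ℝ ((dmax G Vp c : ℕ) : WithBot ℕ)))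
    (hP : P ∈ Fspan (dmax G Vp c)) :
    MM Vstar (X0 G γ U Vp)
      (fun x => ((0 : V → ℝ),
        ∑ v ∈ Dd G Vp c,
          Pi.single v ((P (ftSub G Vp c v) : Polynomial ℝ).eval (xv Vp c v x)))) := by
  rw [X0_eq_secondOrder] at hc ⊢
  have hF := contDiff_networkForce G Vp hU
  have hA := isBracketStable_admissible (hF.differentiable (by simp)) hc (adjShifts Vp c)
  have hPA : operatorFamily G Vp c P ∈ admissible hc (adjShifts Vp c) :=
    Fspan_le_comap_operatorFamily hA (indicator_ft_mem_admissible hU hsym hc) hP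
  rw [← vertical_pairForce_operatorFamily]
  exact (mem_admissible.1 hPA).2

/-- Lemma 4.10. Assume `c` is controllable. Then for every operator
`P ∈ 𝓕 = span{G, G², …, G^{d+1}}` of `P_d`, the vector field
`∑_{v∈D^d} (P f̃_v)(x_v) ∂_{p_v}` belongs to `𝓜`. -/
theorem operator_field_mem
    {V : Type} [Fintype V] [DecidableEq V] (G : SimpleGraph V) [DecidableRel G.Adj]
    (Vstar : Finset V) (γ : V → ℝ) (U : V → ℝ → ℝ) (Vp : V → V → Polynomial ℝ)
    (hγpos : ∀ v ∈ Vstar, 0 < γ v) (hγ0 : ∀ v ∉ Vstar, γ v = 0)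
    (hU : ∀ v, ContDiff ℝ (⊤ : ℕ∞) (U v))
    (hsym : ∀ u v, G.Adj u v → ∀ x : ℝ, (Vp v u).eval x = (Vp u v).eval (-x))
    (hdeg : ∀ u v, G.Adj u v → 3 ≤ (Vp u v).natDegree)
    (c : V) (hc : Controllable Vstar (X0 G γ U Vp) c)
    (P : Module.End ℝ (Polynomial.degreeLE ℝ ((dmax G Vp c : ℕ) : WithBot ℕ)))
    (hP : P ∈ Fspan (dmax G Vp c)) :
    MM Vstar (X0 G γ U Vp)
      (fun x => ((0 : V → ℝ),
        ∑ v ∈ Dd G Vp c,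
          Pi.single v ((P (ftSub G Vp c v) : Polynomial ℝ).eval (xv Vp c v x)))) :=
  operator_field_mem_general G Vstar γ U Vp hU c (hsym c) hc P hP
end
end
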